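/- arXiv:2603.13535 — 2 statements merged into one kernel-verified Lean document; each statement's English description precedes it below -/
import Mathlib

section
/- Let (i,j) ∈ E be an edge of a finite connected simple graph G with ρ_min ≥ 2, let α_i, α_j ∈ [0,1), and fix ϑ ∈ ℝ. Define t_min(ϑ) = min{[(ϑ − Const_α)/Slope_α]₊, ρ_min − 1}. Then c_OR(i,j) ≥ ϑ implies c_BF(i,j) ≥ 𝔖(i,j) + 𝔗(i,j)·t_min(ϑ). In particular: (a) if ϑ ≤ Const_α the conclusion reduces to c_BF(i,j) ≥ 𝔖(i,j); (b) if ϑ > Const_α + Slope_α·(ρ_min − 1) then no edge with the given (ρ_i,ρ_j,α_i,α_j) satisfies c_OR(i,j) ≥ ϑ. -/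
namespace Curv

open Finset

noncomputable section

variable {V : Type*} [Fintype V] [DecidableEq V] (G : SimpleGraph V) [DecidableRel G.Adj]

/-- `μ` is a probability distribution on the (finite) vertex set. -/
def IsProb (μ : V → ℝ) : Prop := (∀ x, 0 ≤ μ x) ∧ ∑ x, μ x = 1

/-- `π` is a coupling of `μ` and `ν`. -/
def IsCoupling (μ ν : V → ℝ) (π : V → V → ℝ) : Prop :=
  (∀ x y, 0 ≤ π x y) ∧ (∀ x, ∑ y, π x y = μ x) ∧ (∀ y, ∑ x, π x y = ν y)

/-- Transport cost of a plan `π` with respect to the shortest-path graph distance. -/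
def cost (π : V → V → ℝ) : ℝ := ∑ x, ∑ y, (G.dist x y : ℝ) * π x y

/-- Wasserstein-1 distance between two distributions on the vertex set. -/
def W1 (μ ν : V → ℝ) : ℝ := sInf {c : ℝ | ∃ π, IsCoupling μ ν π ∧ cost G π = c}

/-- Dirac mass at `u`. -/
def dirac (u : V) : V → ℝ := fun x => if x = u then 1 else 0

/-- Uniform distribution on the neighbours of `u`. -/
def unif (u : V) : V → ℝ := fun x => if G.Adj u x then ((G.degree u : ℝ))⁻¹ else 0

/-- Lazy random-walk measure with laziness parameter `α`. -/
def mGen (α : ℝ) (u : V) : V → ℝ := fun x => α * dirac u x + (1 - α) * unif G u x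

/-- Canonical laziness `1/(deg u + 1)`. -/
def alphaL (u : V) : ℝ := ((G.degree u : ℝ) + 1)⁻¹

/-- The lazy random-walk measure `m_u`. -/
def mLazy (u : V) : V → ℝ := mGen G (alphaL G u) u

/-- Ollivier–Ricci curvature (lazy). -/
def cOR (i j : V) : ℝ := 1 - W1 G (mLazy G i) (mLazy G j)

/-- Non-lazy Ollivier–Ricci curvature. -/
def cOR0 (i j : V) : ℝ := 1 - W1 G (unif G i) (unif G j)

/-- Positive part `[x]₊`. -/
def pos (x : ℝ) : ℝ := max x 0

/-- Triangle count `△(u,v)`. -/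
def tri (u v : V) : ℕ := (G.neighborFinset u ∩ G.neighborFinset v).card

/-- Unique neighbours `N(u) \ (N(v) ∪ {v})`. -/
def uniq (u v : V) : Finset V := G.neighborFinset u \ insert v (G.neighborFinset v)

/-- `ξ_u(u,v)`: unique neighbours of `u` having a neighbour among unique neighbours of `v`. -/
def xiSet (u v : V) : Finset V := (uniq G u v).filter fun k => ∃ w ∈ uniq G v u, G.Adj k w

/-- `Ξ_uv`. -/
def Xi (u v : V) : ℕ := (xiSet G u v).card + (xiSet G v u).card

/-- `□̃(k,u,v) = |N(k) ∩ (N(v)\(N(u)∪{u}))|`. -/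
def boxT (k u v : V) : ℕ := (G.neighborFinset k ∩ uniq G v u).card

/-- `ϖ_max(u,v)`. -/
def varpi (u v : V) : ℕ :=
  max (((G.neighborFinset u).erase v).sup fun k => boxT G k u v)
      (((G.neighborFinset v).erase u).sup fun w => boxT G w v u)

/-- `þ_max(u,v) = ϖ_max(u,v)·max{ρ_u,ρ_v}`. -/
def thMax (u v : V) : ℕ := varpi G u v * max (G.degree u) (G.degree v)

/-- Edgewise 4-cycle coefficient `C₄(u,v)`. -/
def C4 (u v : V) : ℝ := if 0 < Xi G u v then (Xi G u v : ℝ) / (thMax G u v : ℝ) else 0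

/-- Graph-wide 4-cycle constant `C₄(G)`. -/
def C4Graph : ℝ := sSup {x : ℝ | ∃ u v, G.Adj u v ∧ x = C4 G u v}

def rhoMin (i j : V) : ℕ := min (G.degree i) (G.degree j)

def rhoMax (i j : V) : ℕ := max (G.degree i) (G.degree j)

/-- `𝔖(i,j)`. -/
def frakS (i j : V) : ℝ := 2 / (G.degree i : ℝ) + 2 / (G.degree j : ℝ) - 2

/-- `𝔗(i,j)`. -/
def frakT (i j : V) : ℝ := 2 / (rhoMax G i j : ℝ) + 1 / (rhoMin G i j : ℝ)

/-- `𝔎(i,j)`. -/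
def frakK (i j : V) : ℝ := 1 - 1 / (rhoMin G i j : ℝ) - 1 / (rhoMax G i j : ℝ)

/-- `Z_min(i,j)`. -/
def Zmin (i j : V) : ℝ := (tri G i j : ℝ) / (rhoMin G i j : ℝ)

/-- `Z_max(i,j)`. -/
def Zmax (i j : V) : ℝ := (tri G i j : ℝ) / (rhoMax G i j : ℝ)

/-- Balanced Forman curvature. -/
def cBF (i j : V) : ℝ :=
  if rhoMin G i j = 1 then 0
  else frakS G i j + frakT G i j * (tri G i j : ℝ) + C4 G i j

/-- `M` is a matching in the cross-edge bipartite graph `B_ij`. -/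
def IsCrossMatching (i j : V) (M : Finset (V × V)) : Prop :=
  (∀ p ∈ M, p.1 ∈ uniq G i j ∧ p.2 ∈ uniq G j i ∧ G.Adj p.1 p.2) ∧
  (∀ p ∈ M, ∀ q ∈ M, p ≠ q → p.1 ≠ q.1 ∧ p.2 ≠ q.2)

/-- Maximum matching size `𝔪(i,j)` in the cross-edge bipartite graph. -/
def matchNum (i j : V) : ℕ :=
  sSup {n : ℕ | ∃ M : Finset (V × V), IsCrossMatching G i j M ∧ M.card = n}

/-- `𝒮(i,j) = 𝔪(i,j)/ρ_max`. -/
def SS (i j : V) : ℝ := (matchNum G i j : ℝ) / (rhoMax G i j : ℝ)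

/-- Lazy per-neighbour weight `w_u = (1-α)/ρ_u`. -/
def wA (α : ℝ) (u : V) : ℝ := (1 - α) / (G.degree u : ℝ)

/-- Lazy conductance sum `Σ`. -/
def SigmaA (αi αj : ℝ) (i j : V) : ℝ :=
  (G.degree i : ℝ) / (1 - αi) + (G.degree j : ℝ) / (1 - αj)

/-- `Const_α`. -/
def ConstA (αi αj : ℝ) (i j : V) : ℝ :=
  -1 + 2 * (min αi ((1 - αj) / (G.degree j : ℝ)) + min αj ((1 - αi) / (G.degree i : ℝ)))
    + (pos (αi - (1 - αj) / (G.degree j : ℝ)) + pos ((1 - αj) / (G.degree j : ℝ) - αi)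
      + pos (αj - (1 - αi) / (G.degree i : ℝ)) + pos ((1 - αi) / (G.degree i : ℝ) - αj))
    + ((G.degree i : ℝ) + (G.degree j : ℝ) - 2) / SigmaA G αi αj i j

/-- `Slope_α`. -/
def SlopeA (αi αj : ℝ) (i j : V) : ℝ := wA G αi i + wA G αj j - 2 / SigmaA G αi αj i j

/-- `α_⋆`: `α_min` when the non-lazy curvature is nonnegative, `α_max` otherwise. -/
def alphaStar (i j : V) : ℝ :=
  if 0 ≤ cOR0 G i j then min (alphaL G i) (alphaL G j) else max (alphaL G i) (alphaL G j)

/-- `Δ_ij(α) = α_max − α_min` for the canonical laziness. -/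
def DeltaL (i j : V) : ℝ := max (alphaL G i) (alphaL G j) - min (alphaL G i) (alphaL G j)

/-- `t_min(ϑ) = min{[(ϑ − Const_α)/Slope_α]₊, ρ_min − 1}`. -/
def tMin (αi αj : ℝ) (i j : V) (t : ℝ) : ℝ :=
  min (pos ((t - ConstA G αi αj i j) / SlopeA G αi αj i j)) ((rhoMin G i j : ℝ) - 1)


lemma dist_ge_one (hG : G.Connected) {x y : V} (h : x ≠ y) : (1:ℝ) ≤ (G.dist x y : ℝ) := by
  have := hG.pos_dist_of_ne h
  exact_mod_cast this

lemma mGen_nonneg {α : ℝ} (h : α ∈ Set.Ico (0:ℝ) 1) (u x : V) : 0 ≤ mGen G α u x := by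
  have h0 := h.1
  have h1 : 0 ≤ 1 - α := by linarith [h.2]
  unfold mGen dirac unif
  apply add_nonneg <;> apply mul_nonneg <;> first | assumption | (split_ifs <;> positivity)

lemma mGen_sum {α : ℝ} {u : V} (hd : 0 < G.degree u) : ∑ x, mGen G α u x = 1 := by
  have hd' : (G.degree u : ℝ) ≠ 0 := by positivity
  have hu : ∑ x, unif G u x = 1 := by
    unfold unif
    rw [← Finset.sum_filter, Finset.sum_const, nsmul_eq_mul]
    rw [← G.neighborFinset_eq_filter, G.card_neighborFinset_eq_degree]
    field_simp
  have hdi : ∑ x, dirac u x = 1 := by simp [dirac]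
  unfold mGen
  rw [Finset.sum_add_distrib, ← Finset.mul_sum, ← Finset.mul_sum, hu, hdi]
  ring

lemma mGen_uniq {α : ℝ} {u v x : V} (hx : x ∈ uniq G u v) : mGen G α u x = wA G α u := by
  have h1 : G.Adj u x := by
    have := (Finset.mem_sdiff.1 hx).1
    simpa using this
  have h2 : x ≠ u := h1.ne'
  simp [mGen, dirac, unif, wA, h1, h2, div_eq_mul_inv]

lemma mGen_uniq' {α : ℝ} {u v x : V} (hx : x ∈ uniq G u v) : mGen G α v x = 0 := by
  have h1 := (Finset.mem_sdiff.1 hx).2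
  simp only [Finset.mem_insert, SimpleGraph.mem_neighborFinset, not_or] at h1
  simp [mGen, dirac, unif, h1.1, h1.2]

lemma uniq_card {u v : V} (h : G.Adj u v) :
    (uniq G u v).card + 1 + tri G u v = G.degree u := by
  have hv : v ∈ G.neighborFinset u := by simpa using h
  have e : G.neighborFinset u ∩ insert v (G.neighborFinset v)
      = insert v (G.neighborFinset u ∩ G.neighborFinset v) := by
    rw [Finset.inter_insert_of_mem hv]
  have hn : v ∉ G.neighborFinset u ∩ G.neighborFinset v := by simp
  have := Finset.card_sdiff_add_card_inter (G.neighborFinset u) (insert v (G.neighborFinset v))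
  rw [e, Finset.card_insert_of_notMem hn, G.card_neighborFinset_eq_degree] at this
  unfold uniq tri
  omega

lemma tri_comm' (u v : V) : tri G u v = tri G v u := by
  unfold tri; rw [Finset.inter_comm]

lemma cost_lower (hG : G.Connected) {i j : V} {αi αj : ℝ} {π : V → V → ℝ}
    (hπ : IsCoupling (mGen G αi i) (mGen G αj j) π) :
    ∃ C, C ≤ wA G αi i * (uniq G i j).card ∧ C ≤ wA G αj j * (uniq G j i).card ∧
      wA G αi i * (uniq G i j).card + wA G αj j * (uniq G j i).card - C ≤ cost G π := by
  obtain ⟨h0, hr, hc⟩ := hπ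
  have hA : ∑ x ∈ uniq G i j, ∑ y, π x y = wA G αi i * (uniq G i j).card := by
    rw [Finset.sum_congr rfl (fun x hx => (hr x).trans (mGen_uniq G hx)), Finset.sum_const,
      nsmul_eq_mul, mul_comm]
  have hB : ∑ y ∈ uniq G j i, ∑ x, π x y = wA G αj j * (uniq G j i).card := by
    rw [Finset.sum_congr rfl (fun x hx => (hc x).trans (mGen_uniq G hx)), Finset.sum_const,
      nsmul_eq_mul, mul_comm]
  refine ⟨∑ x ∈ uniq G i j, ∑ y ∈ uniq G j i, π x y, ?_, ?_, ?_⟩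
  · rw [← hA]
    exact Finset.sum_le_sum fun x _ =>
      Finset.sum_le_sum_of_subset_of_nonneg (Finset.subset_univ _) fun y _ _ => h0 x y
  · rw [← hB, Finset.sum_comm]
    exact Finset.sum_le_sum fun y _ =>
      Finset.sum_le_sum_of_subset_of_nonneg (Finset.subset_univ _) fun x _ _ => h0 x y
  · rw [← hA, ← hB]
    have eA : ∑ x ∈ uniq G i j, ∑ y, π x y
        = ∑ x, ∑ y, if x ∈ uniq G i j then π x y else 0 := by
      rw [← Finset.sum_filter_add_sum_filter_not Finset.univ (fun x => x ∈ uniq G i j)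
        (fun x => ∑ y, if x ∈ uniq G i j then π x y else 0)]
      rw [Finset.sum_eq_zero (s := Finset.univ.filter (fun x => ¬ x ∈ uniq G i j))
        (fun x hx => by simp [(Finset.mem_filter.1 hx).2]), add_zero]
      rw [Finset.filter_univ_mem]
      exact Finset.sum_congr rfl fun x hx => by simp [hx]
    have eB : ∑ y ∈ uniq G j i, ∑ x, π x y
        = ∑ x, ∑ y, if y ∈ uniq G j i then π x y else 0 := by
      rw [Finset.sum_comm]
      exact Finset.sum_congr rfl fun x _ => by simp
    have eC : ∑ x ∈ uniq G i j, ∑ y ∈ uniq G j i, π x y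
        = ∑ x, ∑ y, if x ∈ uniq G i j ∧ y ∈ uniq G j i then π x y else 0 := by
      have : ∀ x, (∑ y, if x ∈ uniq G i j ∧ y ∈ uniq G j i then π x y else 0)
          = if x ∈ uniq G i j then ∑ y ∈ uniq G j i, π x y else 0 := by
        intro x
        by_cases hx : x ∈ uniq G i j <;> simp [hx]
      rw [Finset.sum_congr rfl fun x _ => this x]
      simp
    rw [eA, eB, eC, ← Finset.sum_add_distrib, ← Finset.sum_sub_distrib]
    unfold cost
    refine Finset.sum_le_sum fun x _ => ?_
    rw [← Finset.sum_add_distrib, ← Finset.sum_sub_distrib]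
    refine Finset.sum_le_sum fun y _ => ?_
    have hp := h0 x y
    by_cases hxy : x = y
    · subst hxy
      have z1 : x ∈ uniq G i j → π x x = 0 := fun hx => by
        have := hc x
        rw [mGen_uniq' G hx, Finset.sum_eq_zero_iff_of_nonneg (fun z _ => h0 z x)] at this
        exact this x (Finset.mem_univ _)
      have z2 : x ∈ uniq G j i → π x x = 0 := fun hx => by
        have := hr x
        rw [mGen_uniq' G hx, Finset.sum_eq_zero_iff_of_nonneg (fun z _ => h0 x z)] at this
        exact this x (Finset.mem_univ _)
      by_cases a : x ∈ uniq G i j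
      · simp [z1 a]
      · by_cases b : x ∈ uniq G j i
        · simp [z2 b]
        · simp [a, b]
    · have hd := dist_ge_one G hG hxy
      have : π x y ≤ (G.dist x y : ℝ) * π x y := le_mul_of_one_le_left hp hd
      by_cases a : x ∈ uniq G i j <;> by_cases b : y ∈ uniq G j i <;> simp [a, b] <;> linarith

lemma wA_pos {α : ℝ} (h : α ∈ Set.Ico (0:ℝ) 1) {u : V} (hd : 0 < G.degree u) :
    0 < wA G α u := by
  have : 0 < 1 - α := by linarith [h.2]
  unfold wA; positivity

lemma sigma_inv {αi αj : ℝ} {i j : V} (hi : 0 < wA G αi i) (hj : 0 < wA G αj j) :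
    SigmaA G αi αj i j = (wA G αi i + wA G αj j) / (wA G αi i * wA G αj j) := by
  have e : SigmaA G αi αj i j = (wA G αi i)⁻¹ + (wA G αj j)⁻¹ := by
    simp [SigmaA, wA]
  rw [e]; field_simp; ring

lemma slope_pos {αi αj : ℝ} {i j : V} (hi : 0 < wA G αi i) (hj : 0 < wA G αj j) :
    0 < SlopeA G αi αj i j := by
  unfold SlopeA
  rw [sigma_inv G hi hj]
  set w := wA G αi i
  set v := wA G αj j
  have : w + v - 2 / ((w + v) / (w * v)) = (w ^ 2 + v ^ 2) / (w + v) := by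
    field_simp; ring
  rw [this]; positivity

lemma min_pos_id (a b : ℝ) : 2 * min a b + (pos (a - b) + pos (b - a)) = a + b := by
  unfold pos
  rcases le_total a b with h | h
  · rw [min_eq_left h, max_eq_right (by linarith), max_eq_left (by linarith)]; ring
  · rw [min_eq_right h, max_eq_left (by linarith), max_eq_right (by linarith)]; ring

lemma main_bound (hG : G.Connected) {i j : V} (hij : G.Adj i j) {αi αj : ℝ}
    (hαi : αi ∈ Set.Ico (0:ℝ) 1) (hαj : αj ∈ Set.Ico (0:ℝ) 1)
    (hdi : 0 < G.degree i) (hdj : 0 < G.degree j) :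
    1 - W1 G (mGen G αi i) (mGen G αj j)
      ≤ ConstA G αi αj i j + SlopeA G αi αj i j * (tri G i j : ℝ) := by
  have hw := wA_pos G hαi hdi
  have hv := wA_pos G hαj hdj
  have ci : (G.degree i : ℝ) = (uniq G i j).card + 1 + tri G i j := by
    exact_mod_cast (uniq_card G hij).symm
  have cj : (G.degree j : ℝ) = (uniq G j i).card + 1 + tri G i j := by
    rw [tri_comm' G i j]; exact_mod_cast (uniq_card G hij.symm).symm
  have ai : αi = 1 - wA G αi i * G.degree i := by
    have : (G.degree i : ℝ) ≠ 0 := by positivity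
    unfold wA; field_simp; ring
  have aj : αj = 1 - wA G αj j * G.degree j := by
    have : (G.degree j : ℝ) ≠ 0 := by positivity
    unfold wA; field_simp; ring
  have m1 := min_pos_id αi (wA G αj j)
  have m2 := min_pos_id αj (wA G αi i)
  have hK : ConstA G αi αj i j = -1 + αi + wA G αj j + αj + wA G αi i
      + ((G.degree i : ℝ) + (G.degree j : ℝ) - 2) / SigmaA G αi αj i j := by
    unfold ConstA
    change -1 + 2 * (min αi (wA G αj j) + min αj (wA G αi i))
      + (pos (αi - wA G αj j) + pos (wA G αj j - αi)
      + pos (αj - wA G αi i) + pos (wA G αi i - αj)) + _ = _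
    linarith
  have key : 1 - (ConstA G αi αj i j + SlopeA G αi αj i j * (tri G i j : ℝ))
      ≤ W1 G (mGen G αi i) (mGen G αj j) := by
    unfold W1
    apply le_csInf
    · refine ⟨_, fun x y => mGen G αi i x * mGen G αj j y, ⟨?_, ?_, ?_⟩, rfl⟩
      · exact fun x y => mul_nonneg (mGen_nonneg G hαi i x) (mGen_nonneg G hαj j y)
      · intro x
        rw [← Finset.mul_sum, mGen_sum G hdj, mul_one]
      · intro y
        rw [← Finset.sum_mul, mGen_sum G hdi, one_mul]
    · rintro c ⟨π, hπ, rfl⟩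
      obtain ⟨C, hC1, hC2, hC3⟩ := cost_lower G hG hπ
      refine le_trans ?_ hC3
      rw [hK]
      unfold SlopeA
      rw [sigma_inv G hw hv]
      generalize wA G αi i = w at *
      generalize wA G αj j = v at *
      rw [ci] at ai ⊢
      rw [cj] at aj ⊢
      generalize ((uniq G i j).card : ℝ) = P at *
      generalize ((uniq G j i).card : ℝ) = Q at *
      generalize (tri G i j : ℝ) = T at *
      have hs : 0 < w + v := by positivity
      have hC : C ≤ w * v / (w + v) * (P + Q) := by
        rw [div_mul_eq_mul_div, le_div_iff₀ hs]
        nlinarith [mul_le_mul_of_nonneg_left hC1 hv.le, mul_le_mul_of_nonneg_left hC2 hw.le]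
      have e : ∀ X : ℝ, X / ((w + v) / (w * v)) = w * v / (w + v) * X := by
        intro X; field_simp
      rw [e, e]
      generalize w * v / (w + v) = h at *
      rw [ai, aj]
      nlinarith
  linarith

lemma tri_le {i j : V} (hij : G.Adj i j) : (tri G i j : ℝ) ≤ (rhoMin G i j : ℝ) - 1 := by
  have h1 := uniq_card G hij
  have h2 := uniq_card G hij.symm
  rw [tri_comm' G j i] at h2
  have : tri G i j + 1 ≤ rhoMin G i j := by unfold rhoMin; omega
  have : (tri G i j : ℝ) + 1 ≤ rhoMin G i j := by exact_mod_cast this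
  linarith

/-- OR-to-BF lower transfer modulus, with the degenerate regimes (a), (b). -/
theorem stmt15 (hG : G.Connected) (i j : V) (hij : G.Adj i j)
    (hmin : 2 ≤ rhoMin G i j) (αi αj : ℝ)
    (hαi : αi ∈ Set.Ico (0:ℝ) 1) (hαj : αj ∈ Set.Ico (0:ℝ) 1) (t : ℝ) :
    (1 - W1 G (mGen G αi i) (mGen G αj j) ≥ t →
      cBF G i j ≥ frakS G i j + frakT G i j * tMin G αi αj i j t) ∧
    (t ≤ ConstA G αi αj i j →
      frakS G i j + frakT G i j * tMin G αi αj i j t = frakS G i j) ∧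
    (t > ConstA G αi αj i j + SlopeA G αi αj i j * ((rhoMin G i j : ℝ) - 1) →
      1 - W1 G (mGen G αi i) (mGen G αj j) < t) := by
  have hd : 2 ≤ G.degree i ∧ 2 ≤ G.degree j := by unfold rhoMin at hmin; omega
  have hdi : 0 < G.degree i := by omega
  have hdj : 0 < G.degree j := by omega
  have hS := slope_pos G (wA_pos G hαi hdi) (wA_pos G hαj hdj)
  have hB := main_bound G hG hij hαi hαj hdi hdj
  have hT := tri_le G hij
  have hT0 : (0:ℝ) ≤ tri G i j := by positivity
  refine ⟨fun h => ?_, fun h => ?_, fun h => ?_⟩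
  · have h1 : tMin G αi αj i j t ≤ tri G i j := by
      refine (min_le_left _ _).trans (max_le ?_ hT0)
      rw [div_le_iff₀ hS]
      linarith
    have hF : 0 ≤ frakT G i j := by unfold frakT; positivity
    have hC : 0 ≤ C4 G i j := by unfold C4; split_ifs <;> positivity
    unfold cBF
    rw [if_neg (by omega)]
    have := mul_le_mul_of_nonneg_left h1 hF
    linarith
  · have h1 : tMin G αi αj i j t = 0 := by
      unfold tMin pos
      rw [max_eq_right (div_nonpos_of_nonpos_of_nonneg (by linarith) hS.le), min_eq_left]
      linarith
    rw [h1]; ring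
  · have := mul_le_mul_of_nonneg_left hT hS.le
    linarith


end

end Curv
end

section
/- Let (i,j) ∈ E be an edge of a finite connected simple graph G with ρ_min ≥ 2, and let the lazy parameters be α_u = 1/(ρ_u+1), with α_⋆ = min{α_i,α_j} if c_OR-0(i,j) ≥ 0 and α_⋆ = max{α_i,α_j} otherwise, and Δ_ij(α) = max{α_i,α_j} − min{α_i,α_j}. Fix ϑ ∈ ℝ and define s₀(ϑ) = (ϑ + Δ_ij(α))/(1 − α_⋆), 𝔎_□ = [𝔎(i,j) − 𝒮(i,j)]₊, s_u^□ = 𝔎_□·(2·ρ_min/ρ_max − 1), and the piecewise triangle envelope u_max(ϑ) given by: u_max(ϑ) = 0 if s₀(ϑ) ≤ −2𝔎_□; u_max(ϑ) = (s₀(ϑ) + 2𝔎_□)/𝔗(i,j) if −2𝔎_□ ≤ s₀(ϑ) ≤ s_u^□; u_max(ϑ) = (ρ_max/2)·(s₀(ϑ) + 𝔎_□) if s_u^□ ≤ s₀(ϑ) ≤ 𝔎_□; and u_max(ϑ) = ρ_max·s₀(ϑ) if s₀(ϑ) ≥ 𝔎_□. Then c_OR(i,j) ≤ ϑ implies c_BF(i,j)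 ≤ 𝔖(i,j) + 𝔗(i,j)·u_max(ϑ) + C₄(i,j). -/
namespace Curv

open Finset

noncomputable section

variable {V : Type*} [Fintype V] [DecidableEq V] (G : SimpleGraph V) [DecidableRel G.Adj]

/-- Quadrangle-effective deficit `𝔎_□ = [𝔎 − 𝒮]₊`. -/
def Ksq (i j : V) : ℝ := pos (frakK G i j - SS G i j)

/-- Non-lazy proxy `s₀(ϑ) = (ϑ + Δ_ij(α))/(1 − α_⋆)`. -/
def sZero (i j : V) (t : ℝ) : ℝ := (t + DeltaL G i j) / (1 - alphaStar G i j)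

/-- Breakpoint `s_u^□ = 𝔎_□·(2ρ_min/ρ_max − 1)`. -/
def sU (i j : V) : ℝ := Ksq G i j * (2 * (rhoMin G i j : ℝ) / (rhoMax G i j : ℝ) - 1)

/-- Piecewise quadrangle triangle-envelope `u_max(ϑ)`. -/
def uMax (i j : V) (t : ℝ) : ℝ :=
  if sZero G i j t ≤ -2 * Ksq G i j then 0
  else if sZero G i j t ≤ sU G i j then (sZero G i j t + 2 * Ksq G i j) / frakT G i j
  else if sZero G i j t ≤ Ksq G i j then
    ((rhoMax G i j : ℝ) / 2) * (sZero G i j t + Ksq G i j)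
  else (rhoMax G i j : ℝ) * sZero G i j t

set_option linter.unusedSectionVars false

/-- Transport plan with cost at most `c` exists. -/
def Tr (μ ν : V → ℝ) (c : ℝ) : Prop := ∃ π, IsCoupling μ ν π ∧ cost G π ≤ c

theorem Tr.add {μ ν μ' ν' : V → ℝ} {c c' : ℝ} (h : Tr G μ ν c) (h' : Tr G μ' ν' c') :
    Tr G (fun x => μ x + μ' x) (fun x => ν x + ν' x) (c + c') := by
  obtain ⟨π, ⟨h1, h2, h3⟩, h4⟩ := h
  obtain ⟨π', ⟨h1', h2', h3'⟩, h4'⟩ := h'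
  refine ⟨fun x y => π x y + π' x y, ⟨fun x y => add_nonneg (h1 x y) (h1' x y), ?_, ?_⟩, ?_⟩
  · intro x; rw [sum_add_distrib, h2, h2']
  · intro x; rw [sum_add_distrib, h3, h3']
  · have : cost G (fun x y => π x y + π' x y) = cost G π + cost G π' := by
      simp only [cost, mul_add, sum_add_distrib]
    linarith

theorem Tr.smul {μ ν : V → ℝ} {c : ℝ} (h : Tr G μ ν c) (r : ℝ) (hr : 0 ≤ r) :
    Tr G (fun x => r * μ x) (fun x => r * ν x) (r * c) := by
  obtain ⟨π, ⟨h1, h2, h3⟩, h4⟩ := h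
  refine ⟨fun x y => r * π x y, ⟨fun x y => mul_nonneg hr (h1 x y), ?_, ?_⟩, ?_⟩
  · intro x; rw [← mul_sum, h2]
  · intro x; rw [← mul_sum, h3]
  · have : cost G (fun x y => r * π x y) = r * cost G π := by
      simp only [cost, mul_sum]
      refine sum_congr rfl fun x _ => sum_congr rfl fun y _ => by ring
    rw [this]; exact mul_le_mul_of_nonneg_left h4 hr

theorem Tr.symm {μ ν : V → ℝ} {c : ℝ} (h : Tr G μ ν c) : Tr G ν μ c := by
  obtain ⟨π, ⟨h1, h2, h3⟩, h4⟩ := h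
  refine ⟨fun x y => π y x, ⟨fun x y => h1 y x, h3, h2⟩, ?_⟩
  have : cost G (fun x y => π y x) = cost G π := by
    simp only [cost]
    rw [sum_comm]
    refine sum_congr rfl fun x _ => sum_congr rfl fun y _ => by rw [G.dist_comm]
  rw [this]; exact h4

theorem Tr.congr {μ ν μ' ν' : V → ℝ} {c c' : ℝ} (h : Tr G μ ν c) (h1 : ∀ x, μ x = μ' x)
    (h2 : ∀ x, ν x = ν' x) (hc : c ≤ c') : Tr G μ' ν' c' := by
  obtain ⟨π, h, h4⟩ := h
  have e1 : μ = μ' := funext h1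
  have e2 : ν = ν' := funext h2
  subst e1 e2
  exact ⟨π, h, h4.trans hc⟩

theorem Tr.prod {μ ν : V → ℝ} (hμ : ∀ x, 0 ≤ μ x) (hν : ∀ x, 0 ≤ ν x) {m n p d : ℝ}
    (hm : ∑ x, μ x = m) (hn : ∑ x, ν x = n) (hp : 0 ≤ p) (hpm : p ≤ m) (hpn : p ≤ n)
    (hd : ∀ x y, μ x ≠ 0 → ν y ≠ 0 → (G.dist x y : ℝ) ≤ d) :
    Tr G (fun x => p / m * μ x) (fun x => p / n * ν x) (d * p) := by
  rcases hp.eq_or_lt with rfl | hp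
  · refine ⟨fun _ _ => 0, ⟨fun _ _ => le_rfl, by simp, by simp⟩, by simp [cost]⟩
  have hm0 : 0 < m := by linarith
  have hn0 : 0 < n := by linarith
  refine ⟨fun x y => p / (m * n) * (μ x * ν y), ⟨fun x y => ?_, ?_, ?_⟩, ?_⟩
  · have := hμ x; have := hν y; positivity
  · intro x; rw [← mul_sum, ← mul_sum, hn]; field_simp
  · intro x; rw [← mul_sum, ← sum_mul, hm]; field_simp
  · have : cost G (fun x y => p / (m * n) * (μ x * ν y)) ≤
      ∑ x, ∑ y, d * (p / (m * n) * (μ x * ν y)) := by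
      refine sum_le_sum fun x _ => sum_le_sum fun y _ => ?_
      by_cases hx : μ x = 0
      · simp [hx]
      by_cases hy : ν y = 0
      · simp [hy]
      refine mul_le_mul_of_nonneg_right (hd x y hx hy) ?_
      have := hμ x; have := hν y; positivity
    refine this.trans (le_of_eq ?_)
    have e : ∀ x, ∑ y, d * (p / (m * n) * (μ x * ν y)) = d * (p / (m * n) * (μ x * n)) := by
      intro x; rw [← mul_sum, ← mul_sum, ← mul_sum, hn]
    simp only [e]
    rw [← mul_sum, ← mul_sum, ← sum_mul, hm]
    field_simp

theorem Tr.diag {μ : V → ℝ} (hμ : ∀ x, 0 ≤ μ x) : Tr G μ μ 0 := by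
  refine ⟨fun x y => if x = y then μ x else 0, ⟨fun x y => ?_, ?_, ?_⟩, ?_⟩
  · dsimp only; split_ifs; exacts [hμ x, le_rfl]
  · simp
  · simp
  · simp [cost]

theorem Tr.matching {i j : V} {M : Finset (V × V)} (hM : IsCrossMatching G i j M) {w : ℝ}
    (hw : 0 ≤ w) :
    Tr G (fun x => if x ∈ M.image Prod.fst then w else 0)
      (fun x => if x ∈ M.image Prod.snd then w else 0) (M.card * w) := by
  refine ⟨fun x y => if (x, y) ∈ M then w else 0, ⟨fun x y => ?_, ?_, ?_⟩, ?_⟩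
  · dsimp only; split_ifs; exacts [hw, le_rfl]
  · intro x
    dsimp only
    split_ifs with h
    · obtain ⟨⟨x', y⟩, hp, rfl⟩ := mem_image.1 h
      rw [sum_eq_single y]
      · rw [if_pos hp]
      · intro z _ hz
        rw [if_neg]
        intro hq
        exact (hM.2 _ hp _ hq (by simpa using hz.symm)).1 rfl
      · simp
    · refine sum_eq_zero fun y _ => if_neg fun hq => h (mem_image.2 ⟨_, hq, rfl⟩)
  · intro x
    dsimp only
    split_ifs with h
    · obtain ⟨⟨y, x'⟩, hp, rfl⟩ := mem_image.1 h
      rw [sum_eq_single y]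
      · rw [if_pos hp]
      · intro z _ hz
        rw [if_neg]
        intro hq
        exact (hM.2 _ hp _ hq (by simpa using hz.symm)).2 rfl
      · simp
    · refine sum_eq_zero fun y _ => if_neg fun hq => h (mem_image.2 ⟨_, hq, rfl⟩)
  · have : ∀ x y, (G.dist x y : ℝ) * (if (x, y) ∈ M then w else 0) =
        if (x, y) ∈ M then w else 0 := by
      intro x y
      split_ifs with h
      · rw [SimpleGraph.dist_eq_one_iff_adj.2 (hM.1 _ h).2.2]; simp
      · simp
    simp only [cost, this]
    rw [← Fintype.sum_prod_type' (f := fun x y => if (x, y) ∈ M then w else 0)]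
    simp

theorem scale_self {μ : V → ℝ} (hμ : ∀ x, 0 ≤ μ x) {m : ℝ} (hm : ∑ x, μ x = m) (x : V) :
    m / m * μ x = μ x := by
  by_cases h : m = 0
  · rw [h, sum_eq_zero_iff_of_nonneg (fun x _ => hμ x)] at hm
    rw [hm x (mem_univ x)]; simp
  · rw [div_self h, one_mul]

theorem Tr.block {μ1 μ2 μ3 ν1 ν2 : V → ℝ} {m1 m2 m3 n1 n2 : ℝ}
    (hμ1 : ∀ x, 0 ≤ μ1 x) (hμ2 : ∀ x, 0 ≤ μ2 x) (hμ3 : ∀ x, 0 ≤ μ3 x)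
    (hν1 : ∀ x, 0 ≤ ν1 x) (hν2 : ∀ x, 0 ≤ ν2 x)
    (hm1 : ∑ x, μ1 x = m1) (hm2 : ∑ x, μ2 x = m2) (hm3 : ∑ x, μ3 x = m3)
    (hn1 : ∑ x, ν1 x = n1) (hn2 : ∑ x, ν2 x = n2)
    {d11 d12 d21 d22 d31 d32 : ℝ}
    (h11 : ∀ x y, μ1 x ≠ 0 → ν1 y ≠ 0 → (G.dist x y : ℝ) ≤ d11)
    (h12 : ∀ x y, μ1 x ≠ 0 → ν2 y ≠ 0 → (G.dist x y : ℝ) ≤ d12)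
    (h21 : ∀ x y, μ2 x ≠ 0 → ν1 y ≠ 0 → (G.dist x y : ℝ) ≤ d21)
    (h22 : ∀ x y, μ2 x ≠ 0 → ν2 y ≠ 0 → (G.dist x y : ℝ) ≤ d22)
    (h31 : ∀ x y, μ3 x ≠ 0 → ν1 y ≠ 0 → (G.dist x y : ℝ) ≤ d31)
    (h32 : ∀ x y, μ3 x ≠ 0 → ν2 y ≠ 0 → (G.dist x y : ℝ) ≤ d32)
    (p11 p12 p21 p22 p31 p32 : ℝ) (q11 : 0 ≤ p11) (q12 : 0 ≤ p12) (q21 : 0 ≤ p21)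
    (q22 : 0 ≤ p22) (q31 : 0 ≤ p31) (q32 : 0 ≤ p32)
    (r1 : p11 + p12 = m1) (r2 : p21 + p22 = m2) (r3 : p31 + p32 = m3)
    (s1 : p11 + p21 + p31 = n1) (s2 : p12 + p22 + p32 = n2) :
    Tr G (fun x => μ1 x + μ2 x + μ3 x) (fun x => ν1 x + ν2 x)
      (d11 * p11 + d12 * p12 + (d21 * p21 + d22 * p22) + (d31 * p31 + d32 * p32)) := by
  have t11 := Tr.prod G hμ1 hν1 hm1 hn1 q11 (by linarith) (by linarith) h11
  have t12 := Tr.prod G hμ1 hν2 hm1 hn2 q12 (by linarith) (by linarith) h12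
  have t21 := Tr.prod G hμ2 hν1 hm2 hn1 q21 (by linarith) (by linarith) h21
  have t22 := Tr.prod G hμ2 hν2 hm2 hn2 q22 (by linarith) (by linarith) h22
  have t31 := Tr.prod G hμ3 hν1 hm3 hn1 q31 (by linarith) (by linarith) h31
  have t32 := Tr.prod G hμ3 hν2 hm3 hn2 q32 (by linarith) (by linarith) h32
  refine (((t11.add G t12).add G (t21.add G t22)).add G (t31.add G t32)).congr G ?_ ?_ le_rfl
  · intro x
    rw [← add_mul, ← add_mul, ← add_mul, ← add_div, ← add_div, ← add_div, r1, r2, r3,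
      scale_self hμ1 hm1, scale_self hμ2 hm2, scale_self hμ3 hm3]
  · intro x
    calc _ = (p11 + p21 + p31) / n1 * ν1 x + (p12 + p22 + p32) / n2 * ν2 x := by ring
      _ = _ := by rw [s1, s2, scale_self hν1 hn1, scale_self hν2 hn2]

theorem card_uniq {i j : V} (hij : G.Adj i j) :
    (G.degree i : ℝ) = 1 + tri G i j + (uniq G i j).card := by
  have h1 : (G.neighborFinset i ∩ insert j (G.neighborFinset j)).card = tri G i j + 1 := by
    rw [inter_insert_of_mem (by simpa using hij), card_insert_of_notMem (by simp)]; rfl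
  have h2 := card_inter_add_card_sdiff (G.neighborFinset i) (insert j (G.neighborFinset j))
  rw [h1, G.card_neighborFinset_eq_degree] at h2
  rw [← h2]; simp only [uniq]; push_cast; ring

theorem pos_of_nonneg {x : ℝ} (h : 0 ≤ x) : pos x = x := max_eq_left h
theorem pos_of_nonpos {x : ℝ} (h : x ≤ 0) : pos x = 0 := max_eq_right h

theorem key (hG : G.Connected) {i j : V} (hij : G.Adj i j) (hdeg : G.degree i ≤ G.degree j)
    {M : Finset (V × V)} (hM : IsCrossMatching G i j M) :
    Tr G (unif G i) (unif G j)
      (1 - (tri G i j / G.degree j : ℝ)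
        + pos (1 - 1 / G.degree i - 1 / G.degree j - M.card / G.degree j - tri G i j / G.degree i)
        + pos (1 - 1 / G.degree i - 1 / G.degree j - M.card / G.degree j
            - tri G i j / G.degree j)) := by
  have ha0 : 0 < G.degree i := (G.degree_pos_iff_exists_adj i).2 ⟨j, hij⟩
  have hci := card_uniq G hij
  have hcj := card_uniq G hij.symm
  have htri : tri G j i = tri G i j := by simp only [tri, inter_comm]
  rw [htri] at hcj
  have ha : (0 : ℝ) < G.degree i := by exact_mod_cast ha0
  have hab : (G.degree i : ℝ) ≤ G.degree j := by exact_mod_cast hdeg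
  have hb : (0 : ℝ) < G.degree j := by linarith
  have hT : (0 : ℝ) ≤ tri G i j := by positivity
  have hM1 : M.image Prod.fst ⊆ uniq G i j := by
    intro x hx; obtain ⟨p, hp, rfl⟩ := mem_image.1 hx; exact (hM.1 p hp).1
  have hM2 : M.image Prod.snd ⊆ uniq G j i := by
    intro x hx; obtain ⟨p, hp, rfl⟩ := mem_image.1 hx; exact (hM.1 p hp).2.1
  have hc1 : (M.image Prod.fst).card = M.card := by
    refine card_image_of_injOn fun p hp q hq h => ?_
    by_contra hne; exact (hM.2 p hp q hq hne).1 h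
  have hc2 : (M.image Prod.snd).card = M.card := by
    refine card_image_of_injOn fun p hp q hq h => ?_
    by_contra hne; exact (hM.2 p hp q hq hne).2 h
  have hmi : (M.card : ℝ) ≤ (uniq G i j).card := by
    rw [← hc1]; exact_mod_cast card_le_card hM1
  have hmj : (M.card : ℝ) ≤ (uniq G j i).card := by
    rw [← hc2]; exact_mod_cast card_le_card hM2
  have memU : ∀ u v x, x ∈ uniq G u v ↔ G.Adj u x ∧ x ≠ v ∧ ¬ G.Adj v x := by
    intro u v x; simp [uniq]
  set a : ℝ := ((G.degree i : ℕ) : ℝ) with hadef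
  set b : ℝ := ((G.degree j : ℕ) : ℝ) with hbdef
  set T : ℝ := ((tri G i j : ℕ) : ℝ) with hTdef
  set m : ℝ := ((M.card : ℕ) : ℝ) with hmdef
  have hinv : b⁻¹ ≤ a⁻¹ := inv_anti₀ ha hab
  have hai : 0 < a⁻¹ := inv_pos.2 ha
  have hbi : 0 < b⁻¹ := inv_pos.2 hb
  -- pieces
  set μ1 : V → ℝ := fun x => if x = j then a⁻¹ else 0 with hμ1
  set μ2 : V → ℝ := fun x => if x ∈ G.neighborFinset i ∩ G.neighborFinset j then a⁻¹ - b⁻¹ else 0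
    with hμ2
  set μ3 : V → ℝ := fun x => (if x ∈ uniq G i j then a⁻¹ else 0)
    - (if x ∈ M.image Prod.fst then b⁻¹ else 0) with hμ3
  set ν1 : V → ℝ := fun x => if x = i then b⁻¹ else 0 with hν1
  set ν2 : V → ℝ := fun x => (if x ∈ uniq G j i then b⁻¹ else 0)
    - (if x ∈ M.image Prod.snd then b⁻¹ else 0) with hν2
  have n1 : ∀ x, 0 ≤ μ1 x := by intro x; simp only [hμ1]; split_ifs <;> linarith
  have n2 : ∀ x, 0 ≤ μ2 x := by intro x; simp only [hμ2]; split_ifs <;> linarith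
  have n3 : ∀ x, 0 ≤ μ3 x := by
    intro x; simp only [hμ3]
    by_cases h : x ∈ M.image Prod.fst
    · rw [if_pos h, if_pos (hM1 h)]; linarith
    · rw [if_neg h]; split_ifs <;> linarith
  have n4 : ∀ x, 0 ≤ ν1 x := by intro x; simp only [hν1]; split_ifs <;> linarith
  have n5 : ∀ x, 0 ≤ ν2 x := by
    intro x; simp only [hν2]
    by_cases h : x ∈ M.image Prod.snd
    · rw [if_pos h, if_pos (hM2 h)]; linarith
    · rw [if_neg h]; split_ifs <;> linarith
  have sumite : ∀ (S : Finset V) (w : ℝ), ∑ x, (if x ∈ S then w else 0) = S.card * w := by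
    intro S w; simp
  have e1 : ∑ x, μ1 x = a⁻¹ := by simp [hμ1]
  have e2 : ∑ x, μ2 x = T * (a⁻¹ - b⁻¹) := by simp only [hμ2]; rw [sumite]; rfl
  have e3 : ∑ x, μ3 x = (a - 1 - T) * a⁻¹ - m * b⁻¹ := by
    simp only [hμ3]; rw [sum_sub_distrib, sumite, sumite, hc1, hci]; ring
  have e4 : ∑ x, ν1 x = b⁻¹ := by simp [hν1]
  have e5 : ∑ x, ν2 x = (b - 1 - T) * b⁻¹ - m * b⁻¹ := by
    simp only [hν2]; rw [sum_sub_distrib, sumite, sumite, hc2, hcj]; ring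
  have f1 : ∀ x, μ1 x ≠ 0 → x = j := by intro x h; by_contra h'; exact h (if_neg h')
  have f2 : ∀ x, μ2 x ≠ 0 → G.Adj i x ∧ G.Adj j x := by
    intro x h; by_contra h'; exact h (if_neg (by simpa using h'))
  have f3 : ∀ x, μ3 x ≠ 0 → G.Adj i x := by
    intro x h
    by_cases hx : x ∈ uniq G i j
    · exact ((memU _ _ _).1 hx).1
    · exact absurd (by simp only [hμ3]; rw [if_neg hx, if_neg (fun h => hx (hM1 h))]; simp) h
  have f4 : ∀ x, ν1 x ≠ 0 → x = i := by intro x h; by_contra h'; exact h (if_neg h')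
  have f5 : ∀ x, ν2 x ≠ 0 → G.Adj j x := by
    intro x h
    by_cases hx : x ∈ uniq G j i
    · exact ((memU _ _ _).1 hx).1
    · exact absurd (by simp only [hν2]; rw [if_neg hx, if_neg (fun h => hx (hM2 h))]; simp) h
  have adj1 : ∀ x y, G.Adj x y → G.dist x y = 1 := fun x y h =>
    SimpleGraph.dist_eq_one_iff_adj.2 h
  have tri3 : ∀ x y z, G.dist x z ≤ G.dist x y + G.dist y z := fun x y z => hG.dist_triangle
  have h11 : ∀ x y, μ1 x ≠ 0 → ν1 y ≠ 0 → (G.dist x y : ℝ) ≤ 1 := by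
    intro x y hx hy; rw [f1 x hx, f4 y hy, adj1 _ _ hij.symm]; simp
  have h12 : ∀ x y, μ1 x ≠ 0 → ν2 y ≠ 0 → (G.dist x y : ℝ) ≤ 1 := by
    intro x y hx hy; rw [f1 x hx, adj1 _ _ (f5 y hy)]; simp
  have h21 : ∀ x y, μ2 x ≠ 0 → ν1 y ≠ 0 → (G.dist x y : ℝ) ≤ 1 := by
    intro x y hx hy; rw [f4 y hy, adj1 _ _ (f2 x hx).1.symm]; simp
  have h22 : ∀ x y, μ2 x ≠ 0 → ν2 y ≠ 0 → (G.dist x y : ℝ) ≤ 2 := by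
    intro x y hx hy
    have := tri3 x j y
    rw [adj1 _ _ (f2 x hx).2.symm, adj1 _ _ (f5 y hy)] at this
    exact_mod_cast this
  have h31 : ∀ x y, μ3 x ≠ 0 → ν1 y ≠ 0 → (G.dist x y : ℝ) ≤ 1 := by
    intro x y hx hy; rw [f4 y hy, adj1 _ _ (f3 x hx).symm]; simp
  have h32 : ∀ x y, μ3 x ≠ 0 → ν2 y ≠ 0 → (G.dist x y : ℝ) ≤ 3 := by
    intro x y hx hy
    have t1 := tri3 x i y
    have t2 := tri3 i j y
    rw [adj1 _ _ (f3 x hx).symm] at t1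
    rw [adj1 _ _ hij, adj1 _ _ (f5 y hy)] at t2
    have : G.dist x y ≤ 3 := by omega
    exact_mod_cast this
  have base := (Tr.diag G (μ := fun x => if x ∈ G.neighborFinset i ∩ G.neighborFinset j
      then b⁻¹ else 0) (by intro x; split_ifs <;> linarith)).add G
      (Tr.matching G hM hbi.le)
  have haa : a * a⁻¹ = 1 := mul_inv_cancel₀ ha.ne'
  have hbb : b * b⁻¹ = 1 := mul_inv_cancel₀ hb.ne'
  have fin : ∀ c c', Tr G (fun x => μ1 x + μ2 x + μ3 x) (fun x => ν1 x + ν2 x) c →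
      0 + m * b⁻¹ + c ≤ c' → Tr G (unif G i) (unif G j) c' := by
    intro c c' h hc
    refine (base.add G h).congr G ?_ ?_ hc
    · intro x
      simp only [hμ1, hμ2, hμ3, unif, memU, mem_inter, SimpleGraph.mem_neighborFinset]
      rw [← hadef]
      by_cases hxj : x = j
      · subst hxj; simp [hij]
      · by_cases h1 : G.Adj i x <;> by_cases h2 : G.Adj j x <;> simp [hxj, h1, h2] <;> ring
    · intro x
      simp only [hν1, hν2, unif, memU, mem_inter, SimpleGraph.mem_neighborFinset]
      rw [← hbdef]
      by_cases hxi : x = i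
      · subst hxi; simp [hij.symm]
      · by_cases h1 : G.Adj i x <;> by_cases h2 : G.Adj j x <;> simp [hxi, h1, h2]
  have blk := Tr.block G n1 n2 n3 n4 n5 e1 e2 e3 e4 e5 h11 h12 h21 h22 h31 h32
  simp only [div_eq_mul_inv, one_mul]
  set A := 1 - a⁻¹ - b⁻¹ - m * b⁻¹ - T * a⁻¹ with hA
  set B := 1 - a⁻¹ - b⁻¹ - m * b⁻¹ - T * b⁻¹ with hB
  have hAB : B - A = T * (a⁻¹ - b⁻¹) := by rw [hA, hB]; ring
  have hABn : 0 ≤ T * (a⁻¹ - b⁻¹) := mul_nonneg hT (by linarith)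
  have hUi : (a - 1 - T) * a⁻¹ - m * b⁻¹ = A + b⁻¹ := by
    rw [hA]; linear_combination haa
  have hUj : (b - 1 - T) * b⁻¹ - m * b⁻¹ = B + a⁻¹ := by
    rw [hB]; linear_combination hbb
  have hUi0 : 0 ≤ A + b⁻¹ := by
    rw [← hUi, ← e3]; exact sum_nonneg fun x _ => n3 x
  have hUj0 : 0 ≤ B + a⁻¹ := by
    rw [← hUj, ← e5]; exact sum_nonneg fun x _ => n5 x
  rw [hUi, hUj, ← hAB] at blk
  rcases le_total 0 A with hA0 | hA0
  · rw [pos_of_nonneg hA0, pos_of_nonneg (x := B) (by linarith)]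
    refine fin _ _ (blk 0 a⁻¹ 0 (B - A) b⁻¹ A le_rfl hai.le le_rfl (by linarith) hbi.le hA0
      (by ring) (by ring) (by ring) (by ring) (by ring)) ?_
    rw [hB]; linarith
  · rw [pos_of_nonpos hA0]
    rcases le_total 0 B with hB0 | hB0
    · rw [pos_of_nonneg hB0]
      refine fin _ _ (blk 0 a⁻¹ (-A) B (A + b⁻¹) 0 le_rfl hai.le (by linarith) hB0 hUi0 le_rfl
        (by ring) (by ring) (by ring) (by ring) (by ring)) ?_
      linarith
    · rw [pos_of_nonpos hB0]
      refine fin _ _ (blk (-B) (B + a⁻¹) (B - A) 0 (A + b⁻¹) 0 (by linarith) hUj0 (by linarith)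
        le_rfl hUi0 le_rfl (by ring) (by ring) (by ring) (by ring) (by ring)) ?_
      linarith

theorem W1_le {μ ν : V → ℝ} {c : ℝ} (h : Tr G μ ν c) : W1 G μ ν ≤ c := by
  obtain ⟨π, h1, h2⟩ := h
  have hb : BddBelow {c : ℝ | ∃ π, IsCoupling μ ν π ∧ cost G π = c} := by
    refine ⟨0, ?_⟩
    rintro _ ⟨π', h', rfl⟩
    exact sum_nonneg fun x _ => sum_nonneg fun y _ => mul_nonneg (by positivity) (h'.1 x y)
  exact (csInf_le hb ⟨π, h1, rfl⟩).trans h2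

theorem unif_nonneg (u x : V) : 0 ≤ unif G u x := by
  unfold unif; split_ifs <;> positivity

theorem unif_sum {u v : V} (h : G.Adj u v) : ∑ x, unif G u x = 1 := by
  have h0 : 0 < G.degree u := (G.degree_pos_iff_exists_adj u).2 ⟨v, h⟩
  have : ∀ x, unif G u x = if x ∈ G.neighborFinset u then ((G.degree u : ℝ))⁻¹ else 0 := by
    intro x; simp [unif]
  simp only [this]
  rw [sum_ite_mem]
  simp only [univ_inter, sum_const, G.card_neighborFinset_eq_degree, nsmul_eq_mul]
  exact mul_inv_cancel₀ (by exact_mod_cast h0.ne')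

theorem Tr.dirac_left (hG : G.Connected) {i j : V} (hij : G.Adj i j) {c : ℝ}
    (h : Tr G (unif G i) (unif G j) c) :
    Tr G (dirac i) (unif G j) (1 + c) ∧ Tr G (dirac i) (unif G j) 2 := by
  obtain ⟨π, ⟨h1, h2, h3⟩, h4⟩ := h
  have hc : IsCoupling (dirac i) (unif G j) (fun x y => dirac i x * unif G j y) := by
    refine ⟨fun x y => mul_nonneg (by unfold dirac; split_ifs <;> simp) (unif_nonneg G j y),
      fun x => ?_, fun y => ?_⟩
    · rw [← mul_sum, unif_sum G hij.symm, mul_one]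
    · rw [← sum_mul]; simp [dirac]
  have hcost : cost G (fun x y => dirac i x * unif G j y) = ∑ y, (G.dist i y : ℝ) * unif G j y := by
    unfold cost
    rw [sum_eq_single i]
    · simp [dirac]
    · intro x _ hx; simp [dirac, hx]
    · simp
  refine ⟨⟨_, hc, ?_⟩, ⟨_, hc, ?_⟩⟩
  · rw [hcost]
    have e : ∑ y, (G.dist i y : ℝ) * unif G j y = ∑ x, ∑ y, (G.dist i y : ℝ) * π x y := by
      rw [sum_comm]
      refine sum_congr rfl fun y _ => ?_
      rw [← mul_sum, h3]
    have e2 : ∑ x, ∑ y, π x y = 1 := by simp only [h2]; exact unif_sum G hij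
    have : ∑ x, ∑ y, (G.dist i y : ℝ) * π x y ≤ ∑ x, ∑ y, (π x y + (G.dist x y : ℝ) * π x y) := by
      refine sum_le_sum fun x _ => sum_le_sum fun y _ => ?_
      by_cases hx : G.Adj i x
      · have t : G.dist i y ≤ G.dist i x + G.dist x y := hG.dist_triangle
        rw [SimpleGraph.dist_eq_one_iff_adj.2 hx] at t
        have t' : (G.dist i y : ℝ) ≤ 1 + G.dist x y := by exact_mod_cast t
        nlinarith [h1 x y]
      · have hz : ∑ y, π x y = 0 := by rw [h2]; simp [unif, hx]
        rw [sum_eq_zero_iff_of_nonneg (fun y _ => h1 x y)] at hz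
        rw [hz y (mem_univ y)]; simp
    simp only [sum_add_distrib] at this
    rw [e2] at this
    unfold cost at h4
    linarith
  · rw [hcost]
    have : ∑ y, (G.dist i y : ℝ) * unif G j y ≤ ∑ y, 2 * unif G j y := by
      refine sum_le_sum fun y _ => ?_
      by_cases hy : G.Adj j y
      · have t : G.dist i y ≤ G.dist i j + G.dist j y := hG.dist_triangle
        rw [SimpleGraph.dist_eq_one_iff_adj.2 hy, SimpleGraph.dist_eq_one_iff_adj.2 hij] at t
        exact mul_le_mul_of_nonneg_right (by exact_mod_cast t) (unif_nonneg G j y)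
      · simp [unif, hy]
    rw [← mul_sum, unif_sum G hij.symm] at this
    linarith

theorem Tr.dirac_dirac {i j : V} (hij : G.Adj i j) : Tr G (dirac i) (dirac j) 1 := by
  refine ⟨fun x y => dirac i x * dirac j y, ⟨fun x y => ?_, ?_, ?_⟩, ?_⟩
  · exact mul_nonneg (by unfold dirac; split_ifs <;> simp) (by unfold dirac; split_ifs <;> simp)
  · intro x; simp [dirac]
  · intro x; simp [dirac]
  · unfold cost
    rw [sum_eq_single i, sum_eq_single j]
    · simp [dirac, SimpleGraph.dist_eq_one_iff_adj.2 hij]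
    · intro x _ hx; simp [dirac, hx]
    · simp
    · intro x _ hx; simp [dirac, hx]
    · simp

theorem lazy_aux (hG : G.Connected) {i j : V} (hij : G.Adj i j) {c : ℝ}
    (h : Tr G (unif G i) (unif G j) c) (hα : alphaL G j ≤ alphaL G i) (hj : 0 ≤ alphaL G j)
    (hi : alphaL G i ≤ 1) (α : ℝ) (hc : α = alphaL G i ∨ α = alphaL G j) :
    Tr G (mLazy G i) (mLazy G j) (α + (1 - α) * c + (alphaL G i - alphaL G j)) := by
  obtain ⟨d1, d2⟩ := h.dirac_left G hG hij
  have dd := Tr.dirac_dirac G hij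
  have main : ∀ d, Tr G (dirac i) (unif G j) d →
      alphaL G j * 1 + (alphaL G i - alphaL G j) * d + (1 - alphaL G i) * c ≤
        α + (1 - α) * c + (alphaL G i - alphaL G j) →
      Tr G (mLazy G i) (mLazy G j) (α + (1 - α) * c + (alphaL G i - alphaL G j)) := by
    intro d hd hle
    refine (((dd.smul G _ hj).add G (hd.smul G (alphaL G i - alphaL G j) (by linarith))).add G
      (h.smul G (1 - alphaL G i) (by linarith))).congr G ?_ ?_ hle
    · intro x; simp only [mLazy, mGen]; ring
    · intro x; simp only [mLazy, mGen]; ring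
  rcases hc with rfl | rfl
  · exact main _ d2 (by linarith)
  · exact main _ d1 (by linarith)

theorem lazy_bound (hG : G.Connected) {i j : V} (hij : G.Adj i j) {c : ℝ}
    (h : Tr G (unif G i) (unif G j) c) (t : ℝ) (hOR : cOR G i j ≤ t) :
    1 - c ≤ sZero G i j t := by
  have ha : ∀ u v, G.Adj u v → 0 < alphaL G u ∧ alphaL G u < 1 := by
    intro u v huv
    have h0 : 0 < G.degree u := (G.degree_pos_iff_exists_adj u).2 ⟨v, huv⟩
    have h1 : (0 : ℝ) < G.degree u := by exact_mod_cast h0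
    exact ⟨by unfold alphaL; positivity, by unfold alphaL; exact inv_lt_one_of_one_lt₀ (by linarith)⟩
  obtain ⟨i0, i1⟩ := ha i j hij
  obtain ⟨j0, j1⟩ := ha j i hij.symm
  have hst : alphaStar G i j = alphaL G i ∨ alphaStar G i j = alphaL G j := by
    unfold alphaStar
    split_ifs
    · exact min_choice _ _
    · exact max_choice _ _
  have hs1 : alphaStar G i j < 1 := by rcases hst with h | h <;> rw [h] <;> assumption
  have hW : Tr G (mLazy G i) (mLazy G j)
      (alphaStar G i j + (1 - alphaStar G i j) * c + DeltaL G i j) := by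
    unfold DeltaL
    rcases le_total (alphaL G j) (alphaL G i) with hle | hle
    · rw [max_eq_left hle, min_eq_right hle]
      exact lazy_aux G hG hij h hle j0.le i1.le _ hst
    · rw [max_eq_right hle, min_eq_left hle]
      exact (lazy_aux G hG hij.symm (h.symm G) hle i0.le j1.le _ hst.symm).symm G
  have := W1_le G hW
  unfold cOR at hOR
  unfold sZero
  rw [le_div_iff₀ (by linarith)]
  linarith

theorem exists_matching (i j : V) :
    ∃ M : Finset (V × V), IsCrossMatching G i j M ∧ M.card = matchNum G i j := by
  have := Nat.sSup_mem (s := {n : ℕ | ∃ M : Finset (V × V), IsCrossMatching G i j M ∧ M.card = n})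
    ⟨0, ∅, by simp [IsCrossMatching], rfl⟩
    ⟨(univ : Finset (V × V)).card, by rintro _ ⟨M, _, rfl⟩; exact card_le_univ M⟩
  exact this

theorem key2 (hG : G.Connected) {i j : V} (hij : G.Adj i j) :
    Tr G (unif G i) (unif G j)
      (1 - (tri G i j / rhoMax G i j : ℝ)
        + pos (frakK G i j - SS G i j - tri G i j / rhoMin G i j)
        + pos (frakK G i j - SS G i j - tri G i j / rhoMax G i j)) := by
  obtain ⟨M, hM, hc⟩ := exists_matching G i j
  unfold frakK SS
  rcases le_total (G.degree i) (G.degree j) with h | h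
  · have := key G hG hij h hM
    rw [hc] at this
    simpa only [rhoMax, rhoMin, max_eq_right h, min_eq_left h] using this
  · have hM' : IsCrossMatching G j i (M.map (Equiv.prodComm V V).toEmbedding) := by
      constructor
      · rintro ⟨x, y⟩ hp
        have hp' : (y, x) ∈ M := by simpa using hp
        exact ⟨(hM.1 _ hp').2.1, (hM.1 _ hp').1, (hM.1 _ hp').2.2.symm⟩
      · rintro ⟨x, y⟩ hp ⟨x', y'⟩ hq hne
        have hp' : (y, x) ∈ M := by simpa using hp
        have hq' : (y', x') ∈ M := by simpa using hq
        have := hM.2 _ hp' _ hq' (by rintro ⟨⟩; exact hne rfl)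
        exact ⟨this.2, this.1⟩
    have := key G hG hij.symm h hM'
    rw [card_map, hc] at this
    have htri : tri G j i = tri G i j := by simp only [tri, inter_comm]
    rw [htri] at this
    refine Tr.symm G ?_
    simpa only [rhoMax, rhoMin, max_eq_left h, min_eq_right h] using this

theorem pos_sub {x z : ℝ} (hz : 0 ≤ z) : pos (x - z) = pos (pos x - z) := by
  unfold pos
  rcases le_total x 0 with h | h
  · rw [max_eq_right h, max_eq_right (by linarith), max_eq_right (by linarith)]
  · rw [max_eq_left h]

theorem tri_le_uMax (hG : G.Connected) (i j : V) (hij : G.Adj i j)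
    (hmin : 2 ≤ rhoMin G i j) (t : ℝ) (hOR : cOR G i j ≤ t) :
    (tri G i j : ℝ) ≤ uMax G i j t := by
  have h := lazy_bound G hG hij (key2 G hG hij) t hOR
  have hT : (0 : ℝ) ≤ tri G i j := by positivity
  have ha : (0 : ℝ) < rhoMin G i j := by exact_mod_cast (by omega : 0 < rhoMin G i j)
  have hab : (rhoMin G i j : ℝ) ≤ rhoMax G i j := by
    unfold rhoMin rhoMax; exact_mod_cast min_le_max
  rw [pos_sub (z := tri G i j / rhoMin G i j) (by positivity),
    pos_sub (z := tri G i j / rhoMax G i j) (by positivity)] at h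
  have hK : 0 ≤ Ksq G i j := le_max_right _ _
  unfold uMax sU frakT
  change _ ≤ _ at h
  rw [← Ksq] at h
  set K := Ksq G i j
  set s := sZero G i j t
  set x : ℝ := ((tri G i j : ℕ) : ℝ)
  set a : ℝ := ((rhoMin G i j : ℕ) : ℝ)
  set b : ℝ := ((rhoMax G i j : ℕ) : ℝ)
  have hb : 0 < b := by linarith
  have hxa : x / a * a = x := div_mul_cancel₀ x ha.ne'
  have hxb : x / b * b = x := div_mul_cancel₀ x hb.ne'
  have hle : x / b ≤ x / a := div_le_div_of_nonneg_left hT ha hab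
  have hxb0 : 0 ≤ x / b := by positivity
  have hr : a / b ≤ 1 := (div_le_one hb).2 hab
  have hr0 : 0 < a / b := by positivity
  have hxr : x / b = x / a * (a / b) := by field_simp
  have e2 : 2 * a / b = 2 * (a / b) := by ring
  rw [e2]
  have hx0 : x / b ≤ 0 → x ≤ 0 := fun h => by nlinarith
  -- three regimes
  have reg : (x / a ≤ K ∧ -2 * K + x / a + 2 * (x / b) ≤ s) ∨
      (K < x / a ∧ x / b ≤ K ∧ -K + 2 * (x / b) ≤ s) ∨ (K < x / a ∧ K < x / b ∧ x / b ≤ s) := by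
    rcases le_or_gt (x / a) K with h1 | h1
    · left
      rw [pos_of_nonneg (by linarith), pos_of_nonneg (by linarith)] at h
      exact ⟨h1, by linarith⟩
    · right
      rw [pos_of_nonpos (x := K - x / a) (by linarith)] at h
      rcases le_or_gt (x / b) K with h2 | h2
      · left
        rw [pos_of_nonneg (by linarith)] at h
        exact ⟨h1, h2, by linarith⟩
      · right
        rw [pos_of_nonpos (by linarith)] at h
        exact ⟨h1, h2, by linarith⟩
  split_ifs with c1 c2 c3
  · apply hx0
    rcases reg with ⟨r1, r2⟩ | ⟨r1, r2, r3⟩ | ⟨r1, r2, r3⟩ <;> linarith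
  · rw [le_div_iff₀ (by positivity)]
    have e3 : x * (2 / b + 1 / a) = 2 * (x / b) + x / a := by ring
    rw [e3]
    rcases reg with ⟨r1, r2⟩ | ⟨r1, r2, r3⟩ | ⟨r1, r2, r3⟩
    · linarith
    · have := mul_lt_mul_of_pos_right r1 hr0
      exfalso; nlinarith
    · exfalso; nlinarith
  · suffices 2 * (x / b) ≤ s + K by nlinarith
    rcases reg with ⟨r1, r2⟩ | ⟨r1, r2, r3⟩ | ⟨r1, r2, r3⟩
    · have := mul_le_mul_of_nonneg_right r1 hr0.le
      nlinarith
    · linarith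
    · linarith
  · suffices x / b ≤ s by nlinarith
    rcases reg with ⟨r1, r2⟩ | ⟨r1, r2, r3⟩ | ⟨r1, r2, r3⟩ <;> linarith

/-- OR-to-BF upper transfer modulus. -/
theorem stmt16 (hG : G.Connected) (i j : V) (hij : G.Adj i j)
    (hmin : 2 ≤ rhoMin G i j) (t : ℝ) (hOR : cOR G i j ≤ t) :
    cBF G i j ≤ frakS G i j + frakT G i j * uMax G i j t + C4 G i j := by
  have h := tri_le_uMax G hG i j hij hmin t hOR
  have hT : 0 ≤ frakT G i j := by unfold frakT; positivity
  have hne : rhoMin G i j ≠ 1 := by omega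
  unfold cBF
  rw [if_neg hne]
  have := mul_le_mul_of_nonneg_left h hT
  linarith

end

end Curv
end
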